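/- arXiv:1912.00870 — 4 statements merged into one kernel-verified Lean document; each statement's English description precedes it below -/
import Mathlib

section
/- Let L ≥ 2 and let H be the linear operator on the space of functions ψ : (ZMod L → Bool) → ℂ defined by (Hψ)(σ) = Σ_{ℓ ∈ ZMod L} (ψ(σ) − ψ(σ ∘ Equiv.swap ℓ (ℓ+1))), i.e. H = Σ_ℓ (𝕀 − P_{ℓ,ℓ+1}) is the Heisenberg XXX Hamiltonian on a cyclic chain of length L. For n ∈ ℤ set p = 2πn/L and define the one-magnon plane-wave state ψ_p by ψ_p(σ) = exp(i p · x.val) if σ takes the value true at exactly one site x ∈ ZMod L and false at all other sites, and ψ_p(σ) = 0 otherwise. Then ψ_p is an eigenvector of H with eigenvalue 4 sin²(p/2), i.e. H ψ_p = (2 − 2 cos p) ψ_p. -/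
/-- The one-magnon plane wave with momentum `p = 2πn/L` is an eigenstate of the
Heisenberg XXX Hamiltonian `H = Σ_ℓ (𝕀 − P_{ℓ,ℓ+1})` on a cyclic chain of
length `L`, with eigenvalue `4 sin²(p/2) = 2 − 2 cos p`. -/
theorem one_magnon_eigenstate_XXX (L : ℕ) [NeZero L] (hL : 2 ≤ L) (n : ℤ) (p : ℝ)
    (hp : p = 2 * Real.pi * n / L)
    (H : ((ZMod L → Bool) → ℂ) →ₗ[ℂ] ((ZMod L → Bool) → ℂ))
    (hH : ∀ (ψ : (ZMod L → Bool) → ℂ) (σ : ZMod L → Bool),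
      H ψ σ = ∑ ℓ : ZMod L, (ψ σ - ψ (σ ∘ ⇑(Equiv.swap ℓ (ℓ + 1)))))
    (ψp : (ZMod L → Bool) → ℂ)
    (hψp : ∀ σ : ZMod L → Bool, ψp σ = ∑ x : ZMod L,
      if σ = (fun y => if y = x then true else false)
      then Complex.exp (Complex.I * (p : ℂ) * (x.val : ℂ)) else 0) :
    H ψp = ((4 * Real.sin (p / 2) ^ 2 : ℝ) : ℂ) • ψp ∧
      ((4 * Real.sin (p / 2) ^ 2 : ℝ) : ℂ) = 2 - 2 * (Real.cos p : ℂ) := by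
  have hLC : (L : ℂ) ≠ 0 := by exact_mod_cast NeZero.ne L
  have : Fact (1 < L) := ⟨by omega⟩
  have hsc : (4 * Real.sin (p / 2) ^ 2 : ℝ) = 2 - 2 * Real.cos p := by
    have h := Real.cos_two_mul (p / 2)
    rw [mul_div_cancel₀ p (two_ne_zero)] at h
    have h2 := Real.sin_sq_add_cos_sq (p / 2)
    linarith
  have hev : ((4 * Real.sin (p / 2) ^ 2 : ℝ) : ℂ) = 2 - 2 * (Real.cos p : ℂ) := by
    rw [hsc]; push_cast; ring
  refine ⟨?_, hev⟩
  obtain ⟨w, hw⟩ : ∃ w : ℂ, w = Complex.exp (Complex.I * (p : ℂ)) := ⟨_, rfl⟩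
  have hw0 : w ≠ 0 := by rw [hw]; exact Complex.exp_ne_zero _
  have hwL : w ^ L = 1 := by
    rw [hw, ← Complex.exp_nat_mul, Complex.exp_eq_one_iff]
    refine ⟨n, ?_⟩
    rw [hp]; push_cast; field_simp
  have hcos : 2 * (Real.cos p : ℂ) = w + w⁻¹ := by
    rw [hw, ← Complex.exp_neg, Complex.ofReal_cos, Complex.two_cos]
    congr 2 <;> ring
  obtain ⟨f, hf⟩ : ∃ f : ZMod L → ℂ, ∀ x, f x = w ^ x.val := ⟨_, fun _ => rfl⟩
  have hfe : ∀ x : ZMod L, Complex.exp (Complex.I * (p : ℂ) * (x.val : ℂ)) = f x := by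
    intro x
    rw [hf, hw, ← Complex.exp_nat_mul, mul_comm]
  have hf1 : ∀ x, f (x + 1) = w * f x := by
    intro x
    rw [hf, hf, ZMod.val_add, ZMod.val_one, ← pow_eq_pow_mod _ hwL, pow_succ, mul_comm]
  have hf2 : ∀ x, f (x - 1) = w⁻¹ * f x := by
    intro x
    have := hf1 (x - 1)
    rw [sub_add_cancel] at this
    rw [this, inv_mul_cancel_left₀ hw0]
  simp only [hfe] at hψp
  have hswap : ∀ (s : Equiv.Perm (ZMod L)) (σ : ZMod L → Bool), s.symm = s →
      ψp (σ ∘ s) = ∑ x : ZMod L,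
        if σ = (fun y => if y = x then true else false) then f (s x) else 0 := by
    intro s σ hs
    rw [hψp, ← Equiv.sum_comp s]
    refine Finset.sum_congr rfl fun x _ => ?_
    refine if_congr ?_ rfl rfl
    constructor
    · intro h
      funext y
      have := congrFun h (s.symm y)
      simp only [Function.comp, Equiv.apply_symm_apply] at this
      rw [this, hs]
      simp
    · rintro rfl
      funext y
      have : s y = x ↔ y = s x := by
        rw [← Equiv.eq_symm_apply, hs]
      simp [this]
  have hlocal : ∀ x : ZMod L, ∑ ℓ : ZMod L, (f x - f (Equiv.swap ℓ (ℓ + 1) x))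
      = (2 - (w + w⁻¹)) * f x := by
    intro x
    have : ∀ ℓ : ZMod L, f x - f (Equiv.swap ℓ (ℓ + 1) x) =
        (if ℓ = x then f x - f (x + 1) else 0) + (if ℓ = x - 1 then f x - f (x - 1) else 0) := by
      intro ℓ
      by_cases h1 : ℓ = x
      · subst h1
        simp only [Equiv.swap_apply_left, if_true, left_eq_add, ite_eq_right_iff]
        intro h
        rw [← h, sub_self]
      · by_cases h2 : ℓ = x - 1
        · subst h2
          simp
        · rw [Equiv.swap_apply_of_ne_of_ne (Ne.symm h1)
            (fun h => h2 (by rw [h, add_sub_cancel_right]))]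
          simp [h1, h2]
    rw [Finset.sum_congr rfl fun ℓ _ => this ℓ, Finset.sum_add_distrib]
    simp only [Finset.sum_ite_eq', Finset.mem_univ, if_true, hf1, hf2]
    ring
  funext σ
  rw [hH, hev, hcos, Pi.smul_apply, smul_eq_mul]
  have : ∀ ℓ : ZMod L, ψp σ - ψp (σ ∘ ⇑(Equiv.swap ℓ (ℓ + 1))) = ∑ x : ZMod L,
      if σ = (fun y => if y = x then true else false)
        then f x - f (Equiv.swap ℓ (ℓ + 1) x) else 0 := by
    intro ℓ
    rw [hswap _ σ (Equiv.symm_swap _ _), hψp, ← Finset.sum_sub_distrib]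
    refine Finset.sum_congr rfl fun x _ => ?_
    split_ifs <;> simp
  rw [Finset.sum_congr rfl fun ℓ _ => this ℓ, Finset.sum_comm, hψp, Finset.mul_sum]
  refine Finset.sum_congr rfl fun x _ => ?_
  split_ifs
  · exact hlocal x
  · simp
end

section
/- Fix κ ∈ ℂ and real momenta p₁, p₂. Set A := 1 + exp(i(p₁+p₂)), assume A − 2κ·exp(i p₁) ≠ 0, and define the scattering amplitude S := −(A − 2κ·exp(i p₂))/(A − 2κ·exp(i p₁)). Define the two-magnon Bethe wavefunction ψ : ℤ × ℤ → ℂ by ψ(x,y) = exp(i(p₁x + p₂y)) + S · exp(i(p₂x + p₁y)), and set E := E(p₁) + E(p₂) with E(p) := 2(1+κ²) − 4κ cos p. Then: (a) for all integers x, y with y > x + 1 (bulk equation), (4+4κ²)ψ(x,y) − 2κ[ψ(x−1,y) + ψ(x+1,y) + ψ(x,y−1) + ψ(x,y+1)] = E·ψ(x,y); and (b) for all integers x (contact equation for the adjacent pair Q Q̃), 4ψ(x,x+1) − 2κ·ψ(x−1,x+1) − 2κ·ψ(x,x+2) = E·ψ(x,x+1). Hence the Bethe ansatz with this S diagonalizes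 the two-magnon sector, and the total energy is additive. -/
/-- The two-magnon Bethe wavefunction `ψ(x,y) = e^{i(p₁x+p₂y)} + S e^{i(p₂x+p₁y)}`
with scattering amplitude `S = −(A − 2κe^{ip₂})/(A − 2κe^{ip₁})`, `A = 1 + e^{i(p₁+p₂)}`,
satisfies the bulk and contact (Q Q̃ ordering) Schrödinger equations of the one-loop
'SU(2)' sector of the N=2 interpolating quiver theory, with additive total energy
`E = E(p₁) + E(p₂)`, `E(p) = 2(1+κ²) − 4κ cos p`. -/
theorem two_magnon_bethe_QQt (κ : ℂ) (p₁ p₂ : ℝ)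
    (A : ℂ) (hA : A = 1 + Complex.exp (Complex.I * ((p₁ : ℂ) + (p₂ : ℂ))))
    (hden : A - 2 * κ * Complex.exp (Complex.I * (p₁ : ℂ)) ≠ 0)
    (S : ℂ) (hS : S = -(A - 2 * κ * Complex.exp (Complex.I * (p₂ : ℂ))) /
      (A - 2 * κ * Complex.exp (Complex.I * (p₁ : ℂ))))
    (ψ : ℤ → ℤ → ℂ)
    (hψ : ∀ x y : ℤ, ψ x y =
      Complex.exp (Complex.I * ((p₁ : ℂ) * (x : ℂ) + (p₂ : ℂ) * (y : ℂ))) +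
      S * Complex.exp (Complex.I * ((p₂ : ℂ) * (x : ℂ) + (p₁ : ℂ) * (y : ℂ))))
    (E : ℂ)
    (hE : E = (2 * (1 + κ ^ 2) - 4 * κ * (Real.cos p₁ : ℂ)) +
      (2 * (1 + κ ^ 2) - 4 * κ * (Real.cos p₂ : ℂ))) :
    (∀ x y : ℤ, y > x + 1 →
      (4 + 4 * κ ^ 2) * ψ x y -
        2 * κ * (ψ (x - 1) y + ψ (x + 1) y + ψ x (y - 1) + ψ x (y + 1)) = E * ψ x y) ∧
    (∀ x : ℤ, 4 * ψ x (x + 1) - 2 * κ * ψ (x - 1) (x + 1) - 2 * κ * ψ x (x + 2) =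
      E * ψ x (x + 1)) := by
  have ha : Complex.exp (Complex.I * (p₁ : ℂ)) ≠ 0 := Complex.exp_ne_zero _
  have hb : Complex.exp (Complex.I * (p₂ : ℂ)) ≠ 0 := Complex.exp_ne_zero _
  have hcos : ∀ p : ℝ, (2 : ℂ) * (Real.cos p : ℂ) =
      Complex.exp (Complex.I * (p : ℂ)) + (Complex.exp (Complex.I * (p : ℂ)))⁻¹ := by
    intro p
    rw [Complex.ofReal_cos, Complex.two_cos, ← Complex.exp_neg]
    congr 2 <;> ring
  have hc1 := hcos p₁
  have hc2 := hcos p₂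
  have hψ' : ∀ x y : ℤ, ψ x y =
      Complex.exp (Complex.I * (p₁ : ℂ)) ^ x * Complex.exp (Complex.I * (p₂ : ℂ)) ^ y +
      S * (Complex.exp (Complex.I * (p₂ : ℂ)) ^ x * Complex.exp (Complex.I * (p₁ : ℂ)) ^ y) := by
    intro x y
    rw [hψ]
    simp only [← Complex.exp_int_mul, ← Complex.exp_add]
    congr 2
    · ring
    · congr 1
      ring
  have hA' : A = 1 + Complex.exp (Complex.I * (p₁ : ℂ)) * Complex.exp (Complex.I * (p₂ : ℂ)) := by
    rw [hA, ← Complex.exp_add, mul_add]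
  have hSS : (A - 2 * κ * Complex.exp (Complex.I * (p₂ : ℂ))) +
      S * (A - 2 * κ * Complex.exp (Complex.I * (p₁ : ℂ))) = 0 := by
    rw [hS, div_mul_cancel₀ _ hden]
    ring
  clear hψ hS hden hA hcos
  generalize Complex.exp (Complex.I * (p₁ : ℂ)) = a at *
  generalize Complex.exp (Complex.I * (p₂ : ℂ)) = b at *
  have bulk : ∀ x y : ℤ, (4 + 4 * κ ^ 2) * ψ x y -
        2 * κ * (ψ (x - 1) y + ψ (x + 1) y + ψ x (y - 1) + ψ x (y + 1)) = E * ψ x y := by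
    intro x y
    have hE' : E = 4 + 4 * κ ^ 2 - 2 * κ * (a + a⁻¹) - 2 * κ * (b + b⁻¹) := by
      rw [hE, ← hc1, ← hc2]
      ring
    rw [hE']
    simp only [hψ', zpow_add_one₀ ha, zpow_add_one₀ hb, zpow_sub_one₀ ha, zpow_sub_one₀ hb]
    ring
  have contact : ∀ x : ℤ, ψ (x + 1) (x + 1) + ψ x x - 2 * κ * ψ x (x + 1) = 0 := by
    intro x
    simp only [hψ', zpow_add_one₀ ha, zpow_add_one₀ hb]
    rw [hA'] at hSS
    linear_combination (a ^ x * b ^ x) * hSS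
  refine ⟨fun x y _ => bulk x y, fun x => ?_⟩
  have h1 := bulk x (x + 1)
  have h2 := contact x
  rw [show x + 1 - 1 = x by ring, show x + 1 + 1 = x + 2 by ring] at h1
  linear_combination h1 + 2 * κ * h2
end

section
/- Fix κ ∈ ℂ with κ ≠ 0 and real momenta p₁, p₂. Set A := 1 + exp(i(p₁+p₂)), assume A − 2κ⁻¹·exp(i p₁) ≠ 0, and define S̃ := −(A − 2κ⁻¹·exp(i p₂))/(A − 2κ⁻¹·exp(i p₁)). Define ψ : ℤ × ℤ → ℂ by ψ(x,y) = exp(i(p₁x + p₂y)) + S̃ · exp(i(p₂x + p₁y)), and set E := E(p₁) + E(p₂) with E(p) := 2(1+κ²) − 4κ cos p. Then: (a) for all integers x, y with y > x + 1 (bulk equation), (4+4κ²)ψ(x,y) − 2κ[ψ(x−1,y) + ψ(x+1,y) + ψ(x,y−1) + ψ(x,y+1)] = E·ψ(x,y); and (b) for all integers x (contact equation for the adjacent pair Q̃ Q), 4κ²·ψ(x,x+1) − 2κ·ψ(x−1,x+1) − 2κ·ψ(x,x+2) = E·ψ(x,x+1). Thus the opposite ordering of the two magnons is diagonalized by the scattering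 amplitude S̃(p₁,p₂,κ) = S(p₁,p₂,κ⁻¹), obtained from S by κ ↦ 1/κ. -/
/-- The two-magnon Bethe wavefunction for the opposite (Q̃ Q) ordering, with
scattering amplitude `S̃ = −(A − 2κ⁻¹e^{ip₂})/(A − 2κ⁻¹e^{ip₁})`, `A = 1 + e^{i(p₁+p₂)}`,
satisfies the bulk and contact Schrödinger equations of the one-loop 'SU(2)' sector
of the N=2 interpolating quiver theory (contact diagonal energy `4κ²`), with additive
total energy `E = E(p₁) + E(p₂)`, `E(p) = 2(1+κ²) − 4κ cos p`.  Thus the opposite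
ordering is diagonalized by `S̃(p₁,p₂,κ) = S(p₁,p₂,κ⁻¹)`. -/
theorem two_magnon_bethe_QtQ (κ : ℂ) (hκ : κ ≠ 0) (p₁ p₂ : ℝ)
    (A : ℂ) (hA : A = 1 + Complex.exp (Complex.I * ((p₁ : ℂ) + (p₂ : ℂ))))
    (hden : A - 2 * κ⁻¹ * Complex.exp (Complex.I * (p₁ : ℂ)) ≠ 0)
    (St : ℂ) (hSt : St = -(A - 2 * κ⁻¹ * Complex.exp (Complex.I * (p₂ : ℂ))) /
      (A - 2 * κ⁻¹ * Complex.exp (Complex.I * (p₁ : ℂ))))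
    (ψ : ℤ → ℤ → ℂ)
    (hψ : ∀ x y : ℤ, ψ x y =
      Complex.exp (Complex.I * ((p₁ : ℂ) * (x : ℂ) + (p₂ : ℂ) * (y : ℂ))) +
      St * Complex.exp (Complex.I * ((p₂ : ℂ) * (x : ℂ) + (p₁ : ℂ) * (y : ℂ))))
    (E : ℂ)
    (hE : E = (2 * (1 + κ ^ 2) - 4 * κ * (Real.cos p₁ : ℂ)) +
      (2 * (1 + κ ^ 2) - 4 * κ * (Real.cos p₂ : ℂ))) :
    (∀ x y : ℤ, y > x + 1 →
      (4 + 4 * κ ^ 2) * ψ x y -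
        2 * κ * (ψ (x - 1) y + ψ (x + 1) y + ψ x (y - 1) + ψ x (y + 1)) = E * ψ x y) ∧
    (∀ x : ℤ, 4 * κ ^ 2 * ψ x (x + 1) - 2 * κ * ψ (x - 1) (x + 1) - 2 * κ * ψ x (x + 2) =
      E * ψ x (x + 1)) := by
  have hz₁ : Complex.exp (Complex.I * (p₁ : ℂ)) ≠ 0 := Complex.exp_ne_zero _
  have hz₂ : Complex.exp (Complex.I * (p₂ : ℂ)) ≠ 0 := Complex.exp_ne_zero _
  have hc : ∀ p : ℝ, (Real.cos p : ℂ) =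
      (Complex.exp (Complex.I * (p : ℂ)) + (Complex.exp (Complex.I * (p : ℂ)))⁻¹) / 2 := by
    intro p
    rw [Complex.ofReal_cos, Complex.cos, ← Complex.exp_neg]
    congr 3 <;> ring_nf
  have hexp : ∀ (p q : ℝ) (x y : ℤ),
      Complex.exp (Complex.I * ((p : ℂ) * (x : ℂ) + (q : ℂ) * (y : ℂ))) =
      Complex.exp (Complex.I * (p : ℂ)) ^ x * Complex.exp (Complex.I * (q : ℂ)) ^ y := by
    intro p q x y
    rw [← Complex.exp_int_mul, ← Complex.exp_int_mul, ← Complex.exp_add]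
    congr 1
    ring
  have hA' : A = 1 + Complex.exp (Complex.I * (p₁ : ℂ)) * Complex.exp (Complex.I * (p₂ : ℂ)) := by
    rw [hA, ← Complex.exp_add]
    congr 2
    ring
  have hS := (eq_div_iff hden).mp hSt
  clear hSt hA hden
  rw [hc p₁, hc p₂] at hE
  simp only [hexp] at hψ
  generalize Complex.exp (Complex.I * (p₁ : ℂ)) = a at *
  generalize Complex.exp (Complex.I * (p₂ : ℂ)) = b at *
  have bulk : ∀ x y : ℤ, (4 + 4 * κ ^ 2) * ψ x y -
        2 * κ * (ψ (x - 1) y + ψ (x + 1) y + ψ x (y - 1) + ψ x (y + 1)) = E * ψ x y := by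
    intro x y
    simp only [hψ, hE, zpow_add₀ hz₁, zpow_add₀ hz₂, zpow_sub₀ hz₁, zpow_sub₀ hz₂, zpow_one]
    ring
  refine ⟨fun x y _ => bulk x y, fun x => ?_⟩
  have h := bulk x (x + 1)
  have e₁ : x + 1 - 1 = x := by ring
  have e₂ : x + 1 + 1 = x + 2 := by ring
  rw [e₁, e₂] at h
  have hS' : κ * A * (1 + St) = 2 * (b + St * a) := by
    have hk : κ * κ⁻¹ = 1 := mul_inv_cancel₀ hκ
    linear_combination κ * hS + 2 * (b + St * a) * hk
  have key : 4 * ψ x (x + 1) - 2 * κ * (ψ (x + 1) (x + 1) + ψ x x) = 0 := by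
    simp only [hψ, zpow_add₀ hz₁, zpow_add₀ hz₂, zpow_one]
    rw [hA'] at hS'
    linear_combination (-2 * a ^ x * b ^ x) * hS'
  linear_combination h - key
end

section
/- Fix κ ∈ ℂ with κ ≠ 0 and real momenta p₁, p₂. Set A := 1 + exp(i(p₁+p₂)) and assume A ≠ 0, A − 2κ·exp(i p₁) ≠ 0 and A − 2κ⁻¹·exp(i p₁) ≠ 0. Then S(p₁,p₂,κ) = S(p₁,p₂,κ⁻¹) if and only if κ² = 1 or exp(i p₁) = exp(i p₂). In particular, away from the orbifold point (κ ≠ ±1) and for generic distinct momenta, the two scattering amplitudes S and S̃ = S(·,·,κ⁻¹) arising from the two orderings of the magnons are different, so the standard Yang–Baxter relation S S̃ S = S̃ S S̃ fails. -/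
/-- The two scattering amplitudes `S(p₁,p₂,κ)` and `S̃ = S(p₁,p₂,κ⁻¹)` arising from
the two orderings of the magnons in the 'SU(2)' sector of the N=2 interpolating
quiver theory agree if and only if `κ² = 1` (the orbifold point) or
`e^{ip₁} = e^{ip₂}` (coincident momenta); hence generically `S ≠ S̃` and the
standard Yang–Baxter relation fails. -/
theorem scattering_amplitudes_differ_iff (κ : ℂ) (hκ : κ ≠ 0) (p₁ p₂ : ℝ)
    (A : ℂ) (hA : A = 1 + Complex.exp (Complex.I * ((p₁ : ℂ) + (p₂ : ℂ))))
    (hA0 : A ≠ 0)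
    (h1 : A - 2 * κ * Complex.exp (Complex.I * (p₁ : ℂ)) ≠ 0)
    (h2 : A - 2 * κ⁻¹ * Complex.exp (Complex.I * (p₁ : ℂ)) ≠ 0) :
    (-(A - 2 * κ * Complex.exp (Complex.I * (p₂ : ℂ))) /
        (A - 2 * κ * Complex.exp (Complex.I * (p₁ : ℂ))) =
      -(A - 2 * κ⁻¹ * Complex.exp (Complex.I * (p₂ : ℂ))) /
        (A - 2 * κ⁻¹ * Complex.exp (Complex.I * (p₁ : ℂ)))) ↔
      (κ ^ 2 = 1 ∨
        Complex.exp (Complex.I * (p₁ : ℂ)) = Complex.exp (Complex.I * (p₂ : ℂ))) := by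
  clear hA
  generalize Complex.exp (Complex.I * (p₁ : ℂ)) = x at *
  generalize Complex.exp (Complex.I * (p₂ : ℂ)) = y at *
  have hk : κ * κ⁻¹ = 1 := mul_inv_cancel₀ hκ
  generalize κ⁻¹ = k at *
  rw [div_eq_div_iff h1 h2]
  constructor
  · intro h
    have h3 : A * ((κ - k) * (x - y)) = 0 := by linear_combination (-1 / 2) * h
    rcases mul_eq_zero.mp ((mul_eq_zero.mp h3).resolve_left hA0) with h4 | h4
    · left
      linear_combination κ * h4 + hk
    · right
      exact sub_eq_zero.mp h4
  · rintro (h | h)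
    · have h4 : κ = k := by
        apply mul_left_cancel₀ hκ
        linear_combination h - hk
      rw [h4]
    · rw [h]
      ring
end
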